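/- arXiv:1206.7094 — 2 statements merged into one kernel-verified Lean document; each statement's English description precedes it below -/
import Mathlib

section
/- Let L be an n×n positive critical binomial matrix and let adj(L) be its adjugate matrix. Then every entry of adj(L) is strictly positive, and all rows of adj(L) are equal; in particular adj(L) has rank 1 over ℚ. -/
/-!
Since the rows of `L` sum to zero, `det L = 0`, so `L * adj L = 0` and every column of `adj L` lies
in the kernel of `L`. By a maximum principle this kernel consists of constant vectors
(`eq_of_mulVec_eq_zero`), so all rows of `adj L` agree. It remains to see that the diagonal
entries of `adj L` are positive (`adjugate_diag_pos`). By Cramer's rule, `c` times the `i`-th one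
is the determinant of `L` with its `i`-th column replaced by `c` times the `i`-th basis vector.
For `c = L i i + 1` every row of that matrix is strictly diagonally dominant with positive diagonal,
and such a matrix has positive determinant (`det_pos_of_sum_row_lt_diag`). The rank statement
follows as `adj L` is the outer product of the all-ones vector and a nonzero row.
-/

/-- The determinant is nonzero all along the segment from the identity to `A`, because strict
diagonal dominance is preserved there; hence it keeps the sign of `det 1 = 1`. -/
lemma det_pos_of_sum_row_lt_diag {ι : Type*} [Fintype ι] [DecidableEq ι] (A : Matrix ι ι ℝ)
    (h : ∀ k, ∑ j ∈ Finset.univ.erase k, |A k j| < A k k) : 0 < A.det := by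
  let f : ℝ → ℝ := fun t => (t • A + (1 - t) • (1 : Matrix ι ι ℝ)).det
  have hf : Continuous f := by
    apply Continuous.matrix_det
    fun_prop
  have hne : ∀ t ∈ Set.Icc (0 : ℝ) 1, f t ≠ 0 := by
    rintro t ⟨ht0, ht1⟩
    apply det_ne_zero_of_sum_row_lt_diag
    intro k
    have hk := h k
    have hs : 0 ≤ ∑ j ∈ Finset.univ.erase k, |A k j| :=
      Finset.sum_nonneg fun _ _ => abs_nonneg _
    have e : ∑ j ∈ Finset.univ.erase k, ‖(t • A + (1 - t) • (1 : Matrix ι ι ℝ)) k j‖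
        = t * ∑ j ∈ Finset.univ.erase k, |A k j| := by
      rw [Finset.mul_sum]
      refine Finset.sum_congr rfl fun j hj => ?_
      have hkj : k ≠ j := (Finset.ne_of_mem_erase hj).symm
      simp [Matrix.one_apply_ne hkj, abs_of_nonneg ht0]
    rw [e]
    refine lt_of_lt_of_le ?_ (le_abs_self _)
    simp only [Matrix.add_apply, Matrix.smul_apply, Matrix.one_apply_eq, smul_eq_mul, mul_one]
    rcases ht0.eq_or_lt with rfl | ht
    · simp
    · nlinarith [mul_lt_mul_of_pos_left hk ht]
  have h0 : f 0 = 1 := by simp [f]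
  have h1 : f 1 = A.det := by simp [f]
  by_contra hcon
  obtain ⟨t, ht, hft⟩ := intermediate_value_Icc' (zero_le_one' ℝ) hf.continuousOn
    (show (0 : ℝ) ∈ Set.Icc (f 1) (f 0) from ⟨by rw [h1]; exact not_lt.mp hcon, by simp [h0]⟩)
  exact hne t ht hft

/-- Maximum principle: at an index `i` where `v` is maximal, `(L v) i = ∑ j, -L i j * (v i - v j)`
is a sum of nonnegative terms, so it vanishes only if `v` is constant. -/
lemma eq_of_mulVec_eq_zero {ι : Type*} [Fintype ι] [Nonempty ι]
    (L : Matrix ι ι ℤ) (hneg : ∀ i j, i ≠ j → L i j < 0) (hrow : ∀ i, ∑ j, L i j = 0)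
    (v : ι → ℤ) (hv : L.mulVec v = 0) (k k' : ι) : v k = v k' := by
  obtain ⟨i, hi⟩ := Finite.exists_max v
  have hz : ∑ j, -L i j * (v i - v j) = 0 := by
    have h1 : ∑ j, L i j * v j = 0 := congrFun hv i
    calc ∑ j, -L i j * (v i - v j) = ∑ j, L i j * v j - (∑ j, L i j) * v i := by
          rw [Finset.sum_mul, ← Finset.sum_sub_distrib]
          exact Finset.sum_congr rfl fun _ _ => by ring
      _ = 0 := by rw [h1, hrow]; simp
  have hnn : ∀ j ∈ Finset.univ, 0 ≤ -L i j * (v i - v j) := by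
    intro j _
    by_cases hij : i = j
    · simp [hij]
    · exact mul_nonneg (by linarith [hneg i j hij]) (by linarith [hi j])
  have hall : ∀ j, v j = v i := by
    intro j
    by_cases hij : i = j
    · rw [hij]
    · have := (Finset.sum_eq_zero_iff_of_nonneg hnn).mp hz j (Finset.mem_univ j)
      rcases mul_eq_zero.mp this with h | h
      · linarith [hneg i j hij]
      · linarith
  rw [hall k, hall k']

/-- Replacing column `i` by `(L i i + 1) • eᵢ` makes row `i` strictly dominant through its enlarged
diagonal entry, and the other rows strictly dominant through the loss of a negative entry. -/
lemma adjugate_diag_pos {ι : Type*} [Fintype ι] [DecidableEq ι]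
    (L : Matrix ι ι ℤ) (hneg : ∀ i j, i ≠ j → L i j < 0) (hrow : ∀ i, ∑ j, L i j = 0) (i : ι) :
    0 < L.adjugate i i := by
  have hrow' : ∑ j ∈ Finset.univ.erase i, |L i j| = L i i := by
    have hr := hrow i
    rw [← Finset.add_sum_erase _ _ (Finset.mem_univ i)] at hr
    rw [eq_neg_of_add_eq_zero_left hr, ← Finset.sum_neg_distrib]
    exact Finset.sum_congr rfl fun j hj =>
      abs_of_neg (hneg i j (Finset.ne_of_mem_erase hj).symm)
  have hLi : 0 ≤ L i i := hrow' ▸ Finset.sum_nonneg fun _ _ => abs_nonneg _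
  have hc : L.adjugate i i * (L i i + 1) = (L.updateCol i (Pi.single i (L i i + 1))).det := by
    rw [← Matrix.cramer_apply, Matrix.cramer_eq_adjugate_mulVec, Matrix.mulVec_single]
    simp
  refine pos_of_mul_pos_left (b := L i i + 1) ?_ (by linarith)
  rw [hc]
  have key := det_pos_of_sum_row_lt_diag
    ((L.updateCol i (Pi.single i (L i i + 1))).map (Int.castRingHom ℝ)) ?_
  · rw [← RingHom.mapMatrix_apply, ← RingHom.map_det] at key
    simpa using key
  · intro k
    suffices h : ∑ j ∈ Finset.univ.erase k, |L.updateCol i (Pi.single i (L i i + 1)) k j|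
        < L.updateCol i (Pi.single i (L i i + 1)) k k by
      simp only [Matrix.map_apply, eq_intCast]
      exact_mod_cast h
    by_cases hki : k = i
    · subst hki
      have e : ∑ j ∈ Finset.univ.erase k, |L.updateCol k (Pi.single k (L k k + 1)) k j|
          = ∑ j ∈ Finset.univ.erase k, |L k j| :=
        Finset.sum_congr rfl fun j hj => by
          rw [Matrix.updateCol_ne (Finset.ne_of_mem_erase hj)]
      rw [e, hrow', Matrix.updateCol_self, Pi.single_eq_same]
      linarith
    · have hik : i ∈ Finset.univ.erase k := Finset.mem_erase.mpr ⟨Ne.symm hki, Finset.mem_univ _⟩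
      have hr := hrow k
      rw [← Finset.add_sum_erase _ _ (Finset.mem_univ k), ← Finset.add_sum_erase _ _ hik] at hr
      rw [← Finset.add_sum_erase _ _ hik, Matrix.updateCol_self, Matrix.updateCol_ne hki,
        Pi.single_eq_of_ne hki]
      have e : ∑ j ∈ (Finset.univ.erase k).erase i, |L.updateCol i (Pi.single i (L i i + 1)) k j|
          = -∑ j ∈ (Finset.univ.erase k).erase i, L k j := by
        rw [← Finset.sum_neg_distrib]
        refine Finset.sum_congr rfl fun j hj => ?_
        have hj' := Finset.mem_erase.mp hj
        rw [Matrix.updateCol_ne hj'.1,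
          abs_of_neg (hneg k j (Finset.ne_of_mem_erase hj'.2).symm)]
      rw [e, abs_zero]
      linarith [hneg k i hki]


/-- For an `(n+1)×(n+1)` positive critical binomial (PCB) matrix `L`,
every entry of the adjugate matrix `adj(L)` is strictly positive, all rows of `adj(L)`
are equal, and `adj(L)` has rank `1` over `ℚ`. -/
theorem stmt1 {n : ℕ} (hn : 1 ≤ n)
    (a : Fin (n + 1) → Fin (n + 1) → ℕ) (hpos : ∀ i j, 0 < a i j)
    (hsum : ∀ i, a i i = ∑ j ∈ Finset.univ.erase i, a i j)
    (L : Matrix (Fin (n + 1)) (Fin (n + 1)) ℤ)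
    (hL : ∀ i j, L i j = if i = j then (a i i : ℤ) else -(a i j : ℤ)) :
    (∀ i j, 0 < L.adjugate i j) ∧
      (∀ i i', L.adjugate i = L.adjugate i') ∧
      (L.adjugate.map (Int.cast : ℤ → ℚ)).rank = 1 := by
  have hneg : ∀ i j, i ≠ j → L i j < 0 := by
    intro i j hij
    rw [hL, if_neg hij]
    have := hpos i j
    omega
  have hrow : ∀ i, ∑ j, L i j = 0 := by
    intro i
    rw [← Finset.add_sum_erase _ _ (Finset.mem_univ i), hL, if_pos rfl, hsum i, Nat.cast_sum,
      ← Finset.sum_add_distrib]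
    refine Finset.sum_eq_zero fun j hj => ?_
    rw [hL, if_neg (Finset.ne_of_mem_erase hj).symm]
    ring
  have hdet : L.det = 0 := by
    refine Matrix.exists_mulVec_eq_zero_iff.mp ⟨fun _ => 1, ?_, ?_⟩
    · exact fun h => one_ne_zero (congrFun h 0)
    · ext i
      simpa [Matrix.mulVec, dotProduct] using hrow i
  have hcol : ∀ i i' j, L.adjugate i j = L.adjugate i' j := by
    intro i i' j
    refine eq_of_mulVec_eq_zero L hneg hrow (fun k => L.adjugate k j) ?_ i i'
    ext k
    have := congrFun (congrFun L.mul_adjugate k) j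
    rw [hdet, zero_smul] at this
    exact this
  have hp : ∀ i j, 0 < L.adjugate i j := fun i j => by
    rw [hcol i j j]
    exact adjugate_diag_pos L hneg hrow j
  refine ⟨hp, fun i i' => funext (hcol i i'), le_antisymm ?_ ?_⟩
  · have e : L.adjugate.map (Int.cast : ℤ → ℚ)
        = Matrix.vecMulVec (fun _ => 1) (fun j => (L.adjugate 0 j : ℚ)) := by
      ext i j
      simp [Matrix.vecMulVec_apply, hcol i 0 j]
    rw [e]
    exact Matrix.rank_vecMulVec_le _ _
  · rw [Nat.one_le_iff_ne_zero, Ne, Matrix.rank, Submodule.finrank_eq_zero,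
      LinearMap.range_eq_bot]
    intro h
    have h00 := congrFun (LinearMap.congr_fun h (Pi.single 0 1)) 0
    simp only [Matrix.mulVecLin_apply, Matrix.mulVec_single_one, Matrix.col_apply,
      Matrix.map_apply, LinearMap.zero_apply, Pi.zero_apply, Int.cast_eq_zero] at h00
    exact (hp 0 0).ne' h00
end

section
/- For the PCB ideal I, either I is unmixed and I = S(I), or there exists an 𝔪-primary ideal 𝔠 of A such that I = S(I) ∩ 𝔠 and this intersection is irredundant (in particular I ≠ S(I) and I ≠ 𝔠). -/
/-!
A prime containing `I` and one variable `x_i` contains every variable, since `f_j` and `x_i` force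
`x_j ^ a_jj` into it; so it equals `𝔪`. Put `x = x_0 ⋯ x_n`; then `z ∈ S(I)` means `x ^ N z ∈ I`
for some `N`.

If `I ≠ S(I)`: some power of `x` multiplies the finitely generated ideal `S(I)` into `I`, so every
prime containing `I : S(I)` equals `𝔪`, and a power of `𝔪` multiplies `S(I)` into `I`. By Artin–Rees,
`I = S(I) ∩ (I + 𝔪 ^ N)` for `N` large, and `𝔠 = I + 𝔪 ^ N` is `𝔪`-primary. It differs from `I`
because `I` vanishes at `(1, …, 1)`.

If `I = S(I)`: each `x_i` is a nonzerodivisor modulo `I`. The PCB matrix has a nonnegative vector `w`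
in its left kernel with `w_0 > 0` (`exists_weight`), and `I` is homogeneous for the weights `w`;
hence every nonzero polynomial in `x_0` is a nonzerodivisor modulo `I`. An associated prime `p`
therefore contains no such polynomial. If `Q ⊊ p` were a prime containing `I`, then, since the PCB
matrix without its `0`-th row and column is nonsingular (strict diagonal dominance), each `x_i`
satisfies a multiplicative relation with `x_0` modulo `Q`, so that `A ⧸ Q` is algebraic over `k[x_0]`
and the nonzero ideal `p / Q` meets `k[x_0]` in a nonzero polynomial (`exists_aeval_mem`): a
contradiction. So `p` is minimal.
-/

open MvPolynomial

/-! ### The PCB matrix -/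

/-- The PCB matrix `L`, with diagonal entries `a i i` and off-diagonal entries `-a i j`. -/
def pcbMatrix {n : ℕ} (a : Fin (n + 1) → Fin (n + 1) → ℕ) :
    Matrix (Fin (n + 1)) (Fin (n + 1)) ℤ :=
  Matrix.of fun i j => if i = j then (a i i : ℤ) else -(a i j : ℤ)

/-- The left kernel of the PCB matrix contains a nonnegative integer vector with nonzero
first entry: weighting `x_i` by `w i` makes every `f_j` homogeneous. The matrix is singular because
its rows sum to zero, and for `v` in the left kernel the vector of absolute values is again there,
since the inequalities `|v j| a j j ≤ ∑ |v i| a i j` given by the columns sum to an equality. -/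
theorem exists_weight {n : ℕ} (a : Fin (n + 1) → Fin (n + 1) → ℕ) (hpos : ∀ i j, 0 < a i j)
    (hsum : ∀ i, a i i = ∑ j ∈ Finset.univ.erase i, a i j) :
    ∃ w : Fin (n + 1) → ℕ, 0 < w 0 ∧
      ∀ j, w j * a j j = ∑ i ∈ Finset.univ.erase j, w i * a i j := by
  have hdet : (pcbMatrix a).det = 0 := by
    rw [← Matrix.exists_mulVec_eq_zero_iff]
    refine ⟨fun _ => 1, fun h => one_ne_zero (congrFun h 0), ?_⟩
    ext i
    have h := hsum i
    simp only [Matrix.mulVec, dotProduct, pcbMatrix, Matrix.of_apply, mul_one, Pi.zero_apply]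
    rw [← Finset.add_sum_erase _ _ (Finset.mem_univ i), if_pos rfl,
      Finset.sum_congr rfl (g := fun j => -(a i j : ℤ))
        (fun j hj => if_neg (Finset.ne_of_mem_erase hj).symm), h, Finset.sum_neg_distrib]
    push_cast
    ring
  obtain ⟨v, hv0, hv⟩ := Matrix.exists_vecMul_eq_zero_iff.mpr hdet
  have hv' : ∀ j, v j * a j j = ∑ i ∈ Finset.univ.erase j, v i * a i j := by
    intro j
    have h := congrFun hv j
    simp only [Matrix.vecMul, dotProduct, pcbMatrix, Matrix.of_apply, Pi.zero_apply] at h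
    rw [← Finset.add_sum_erase _ _ (Finset.mem_univ j), if_pos rfl,
      Finset.sum_congr rfl (g := fun i => -(v i * a i j : ℤ))
        (fun i hi => by rw [if_neg (Finset.ne_of_mem_erase hi)]; ring),
      Finset.sum_neg_distrib] at h
    linarith
  have hle : ∀ j ∈ Finset.univ,
      |v j| * a j j ≤ ∑ i ∈ Finset.univ.erase j, |v i| * (a i j : ℤ) := by
    intro j _
    calc |v j| * a j j = |v j * a j j| := by rw [abs_mul, Nat.abs_cast]
      _ ≤ ∑ i ∈ Finset.univ.erase j, |v i * a i j| := by
          rw [hv' j]; exact Finset.abs_sum_le_sum_abs _ _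
      _ = _ := by simp [abs_mul]
  have htot : ∑ j, |v j| * (a j j : ℤ)
      = ∑ j, ∑ i ∈ Finset.univ.erase j, |v i| * (a i j : ℤ) := by
    rw [Finset.sum_comm' (t' := Finset.univ) (s' := fun i => Finset.univ.erase i)
      (by intro x y; simp [eq_comm])]
    refine Finset.sum_congr rfl fun i _ => ?_
    rw [← Finset.mul_sum, hsum i]
    push_cast
    rfl
  have heq := (Finset.sum_eq_sum_iff_of_le hle).mp htot
  have hw : ∀ j, (v j).natAbs * a j j =
      ∑ i ∈ Finset.univ.erase j, (v i).natAbs * a i j := by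
    intro j
    have := heq j (Finset.mem_univ j)
    zify
    exact this
  refine ⟨fun i => (v i).natAbs, ?_, hw⟩
  rw [pos_iff_ne_zero]
  intro h0
  apply hv0
  ext i
  by_cases hi : i = 0
  · subst hi; simpa using h0
  · have := hw 0
    simp only [h0, zero_mul] at this
    have := (Finset.sum_eq_zero_iff.mp this.symm) i (Finset.mem_erase.mpr ⟨hi, Finset.mem_univ _⟩)
    have h2 := (hpos i 0).ne'
    simpa [h2] using this

/-- Modulo the `0`-th coordinate, a positive multiple of each basis vector is an integer
combination of the columns of the PCB matrix. Deleting the `0`-th row and column leaves a strictly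
diagonally dominant, hence nonsingular, matrix. -/
theorem exists_column_combination {n : ℕ} (a : Fin (n + 1) → Fin (n + 1) → ℕ)
    (hpos : ∀ i j, 0 < a i j)
    (hsum : ∀ i, a i i = ∑ j ∈ Finset.univ.erase i, a i j) (i : Fin (n + 1)) :
    ∃ (v : Fin (n + 1) → ℤ) (N : ℕ), 0 < N ∧
      ∀ r, r ≠ 0 → (pcbMatrix a).mulVec v r = if r = i then (N : ℤ) else 0 := by
  -- Column `0` is replaced by a multiple of a basis vector, large enough for row `0` to be
  -- strictly dominated by its diagonal entry too.
  set M : Matrix (Fin (n + 1)) (Fin (n + 1)) ℤ :=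
    (pcbMatrix a).updateCol 0 (Pi.single 0 ((a 0 0 : ℤ) + 1)) with hM
  have hdet : M.det ≠ 0 := by
    have key : (M.map (Int.cast : ℤ → ℝ)).det ≠ 0 := by
      apply det_ne_zero_of_sum_row_lt_diag
      intro r
      by_cases hr : r = 0
      · subst hr
        have h1 : ∀ j ∈ Finset.univ.erase (0 : Fin (n + 1)),
            ‖(M.map (Int.cast : ℤ → ℝ)) 0 j‖ = (a 0 j : ℝ) := by
          intro j hj
          have hj := Finset.ne_of_mem_erase hj
          simp [hM, pcbMatrix, hj, hj.symm]
        rw [Finset.sum_congr rfl h1]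
        have h2 : ‖(M.map (Int.cast : ℤ → ℝ)) 0 0‖ = (a 0 0 : ℝ) + 1 := by
          simp only [hM, Matrix.map_apply, Matrix.updateCol_self, Pi.single_eq_same]
          push_cast
          rw [Real.norm_of_nonneg (by positivity)]
        rw [h2, hsum 0]
        push_cast
        linarith
      · have h2 : ‖(M.map (Int.cast : ℤ → ℝ)) r r‖ = (a r r : ℝ) := by
          simp [hM, pcbMatrix, hr]
        rw [h2, hsum r]
        push_cast
        refine Finset.sum_lt_sum ?_ ⟨0, Finset.mem_erase.mpr ⟨Ne.symm hr, Finset.mem_univ _⟩, ?_⟩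
        · intro j hj
          have hj := Finset.ne_of_mem_erase hj
          by_cases hj0 : j = 0
          · subst hj0
            simp [hM, hr]
          · simp [hM, pcbMatrix, hj0, hj.symm]
        · simpa [hM, Matrix.updateCol_apply, hr] using hpos r 0
    intro h
    apply key
    have := Int.cast_det (R := ℝ) M
    rw [h] at this
    simpa using this.symm
  set u : Fin (n + 1) → ℤ := M.adjugate.mulVec (Pi.single i 1) with hu
  have hMu : M.mulVec u = Pi.single i M.det := by
    rw [hu, Matrix.mulVec_mulVec, Matrix.mul_adjugate, Matrix.smul_mulVec, Matrix.one_mulVec]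
    ext r
    simp [Pi.single_apply]
  -- The factor `M.det` makes the resulting multiple `M.det ^ 2` positive.
  refine ⟨fun j => M.det * (if j = 0 then 0 else u j), (M.det * M.det).natAbs, ?_, ?_⟩
  · exact Int.natAbs_pos.mpr (mul_ne_zero hdet hdet)
  · intro r hr
    rw [Int.natAbs_of_nonneg (mul_self_nonneg _)]
    have h := congrFun hMu r
    have h2 : (pcbMatrix a).mulVec (fun j => M.det * (if j = 0 then 0 else u j)) r
        = M.det * M.mulVec u r := by
      simp only [Matrix.mulVec, dotProduct]
      rw [Finset.mul_sum]
      refine Finset.sum_congr rfl fun j _ => ?_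
      by_cases hj : j = 0
      · subst hj; simp [hM, hr]
      · simp only [hM, Matrix.updateCol_apply, hj, if_false]
        ring
    rw [h2, h, Pi.single_apply]
    split_ifs <;> simp

/-- At a point with nonzero coordinates where all `f_j` vanish, every coordinate is
multiplicatively dependent on the `0`-th one. -/
theorem exists_pow_relation {n : ℕ} (a : Fin (n + 1) → Fin (n + 1) → ℕ)
    (hpos : ∀ i j, 0 < a i j)
    (hsum : ∀ i, a i i = ∑ j ∈ Finset.univ.erase i, a i j)
    {K : Type*} [Field K] (y : Fin (n + 1) → K) (hy : ∀ i, y i ≠ 0)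
    (hrel : ∀ j, y j ^ a j j = ∏ i ∈ Finset.univ.erase j, y i ^ a i j)
    (i : Fin (n + 1)) (hi : i ≠ 0) :
    ∃ (N m : ℕ), 0 < N ∧ (y i ^ N * y 0 ^ m = 1 ∨ y i ^ N = y 0 ^ m) := by
  obtain ⟨v, N, hN, hv⟩ := exists_column_combination a hpos hsum i
  have hcol : ∀ j, ∏ r, y r ^ (pcbMatrix a r j) = 1 := by
    intro j
    rw [← Finset.mul_prod_erase _ _ (Finset.mem_univ j),
      Finset.prod_congr rfl (g := fun r => (y r ^ a r j)⁻¹)]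
    · simp only [pcbMatrix, Matrix.of_apply, if_true, zpow_natCast, Finset.prod_inv_distrib]
      rw [hrel j, mul_inv_cancel₀]
      exact Finset.prod_ne_zero_iff.mpr fun r _ => pow_ne_zero _ (hy r)
    · intro r hr
      simp [pcbMatrix, Finset.ne_of_mem_erase hr]
  have hall : ∏ r, y r ^ ((pcbMatrix a).mulVec v r) = 1 := by
    have hzs : ∀ r, y r ^ ((pcbMatrix a).mulVec v r)
        = ∏ j, (y r ^ (pcbMatrix a r j)) ^ v j := by
      intro r
      simp only [Matrix.mulVec, dotProduct, ← zpow_mul]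
      generalize (Finset.univ : Finset (Fin (n+1))) = s
      induction s using Finset.induction_on with
      | empty => simp
      | insert b s hb ih => rw [Finset.sum_insert hb, Finset.prod_insert hb, zpow_add₀ (hy r), ih]
    rw [Finset.prod_congr rfl fun r _ => hzs r, Finset.prod_comm]
    refine Finset.prod_eq_one fun j _ => ?_
    rw [Finset.prod_zpow, hcol, one_zpow]
  rw [← Finset.mul_prod_erase _ _ (Finset.mem_univ 0),
    Finset.prod_eq_single_of_mem i (Finset.mem_erase.mpr ⟨hi, Finset.mem_univ _⟩)
      (fun r hr hri => by rw [hv r (Finset.ne_of_mem_erase hr), if_neg hri, zpow_zero]),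
    hv i hi, if_pos rfl, zpow_natCast] at hall
  rcases Int.eq_nat_or_neg ((pcbMatrix a).mulVec v 0) with ⟨m, h | h⟩
  · refine ⟨N, m, hN, Or.inl ?_⟩
    rw [h, zpow_natCast, mul_comm] at hall
    exact hall
  · refine ⟨N, m, hN, Or.inr ?_⟩
    rw [h, zpow_neg, zpow_natCast] at hall
    exact (inv_mul_eq_one₀ (pow_ne_zero _ (hy 0))).mp hall |>.symm

/-! ### Nonzerodivisors from the weight grading -/

/-- If `t` is a nonzerodivisor, homogeneous of positive degree `d` for the grading
encoded by the coaction `Φ : R → R[T]`, then every nonzero polynomial in `t` over `k` is a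
nonzerodivisor: after applying `Φ`, its terms have distinct `T`-degrees. -/
theorem aeval_mem_nonZeroDivisors_of_coaction {k R : Type*} [Field k] [CommRing R] [Algebra k R]
    (Φ : R →ₐ[k] Polynomial R) (hΦ : Function.Injective Φ) (t : R) (d : ℕ) (hd : 0 < d)
    (ht : Φ t = Polynomial.C t * Polynomial.X ^ d) (htR : t ∈ nonZeroDivisors R)
    (c : Polynomial k) (hc : c ≠ 0) : Polynomial.aeval t c ∈ nonZeroDivisors R := by
  have hcoeff : ∀ b e : ℕ, ((Polynomial.C t * Polynomial.X ^ d) ^ b).coeff e =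
      if e = d * b then t ^ b else 0 := by
    intro b e
    rw [mul_pow, ← pow_mul, ← map_pow, Polynomial.coeff_C_mul_X_pow]
  have hΦc : Φ (Polynomial.aeval t c) ∈ nonZeroDivisors (Polynomial R) := by
    apply Polynomial.mem_nonzeroDivisors_of_coeff_mem (d * c.natDegree)
    rw [← Polynomial.aeval_algHom_apply, ht, Polynomial.aeval_eq_sum_range,
      Polynomial.finsetSum_coeff, Finset.sum_eq_single c.natDegree]
    · rw [Polynomial.coeff_smul, hcoeff, if_pos rfl, Algebra.smul_def]
      have hlead : IsUnit (c.coeff c.natDegree) := (Polynomial.leadingCoeff_ne_zero.mpr hc).isUnit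
      exact mul_mem (hlead.map (algebraMap k R)).mem_nonZeroDivisors (pow_mem htR _)
    · intro b _ hb
      rw [Polynomial.coeff_smul, hcoeff, if_neg, smul_zero]
      exact fun h => hb (Nat.eq_of_mul_eq_mul_left hd h).symm
    · intro h
      simp at h
  rw [mem_nonZeroDivisors_iff_right]
  intro z hz
  apply hΦ
  rw [map_zero]
  refine (mem_nonZeroDivisors_iff_right.mp hΦc) _ ?_
  rw [← map_mul, hz, map_zero]

/-- The substitution `x_i ↦ y_i T ^ w_i` kills a binomial that vanishes at `y` and is
homogeneous for the weights `w`. -/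
theorem aeval_scaled_binomial {n : ℕ} {k R : Type*} [Field k] [CommRing R] [Algebra k R]
    (a : Fin (n + 1) → Fin (n + 1) → ℕ) (w : Fin (n + 1) → ℕ) (y : Fin (n + 1) → R)
    (j : Fin (n + 1)) (hw : w j * a j j = ∑ i ∈ Finset.univ.erase j, w i * a i j)
    (hy : y j ^ a j j = ∏ i ∈ Finset.univ.erase j, y i ^ a i j) :
    MvPolynomial.aeval (R := k) (fun i => Polynomial.C (y i) * Polynomial.X ^ w i)
      (X j ^ a j j - ∏ i ∈ Finset.univ.erase j, X i ^ a i j) = 0 := by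
  simp only [map_sub, map_prod, map_pow, MvPolynomial.aeval_X, mul_pow, Finset.prod_mul_distrib,
    ← pow_mul]
  rw [Finset.prod_pow_eq_pow_sum, ← hw, ← sub_mul]
  simp only [← map_pow, ← map_prod, ← map_sub]
  rw [hy, sub_self, map_zero, zero_mul]

/-- The weight grading of `A ⧸ I`, as the homomorphism `x_i ↦ x_i T ^ w_i` to
`(A ⧸ I)[T]`; it is injective because setting `T = 1` is a left inverse. -/
theorem exists_coaction {n : ℕ} {k : Type*} [Field k]
    (a : Fin (n + 1) → Fin (n + 1) → ℕ) (w : Fin (n + 1) → ℕ)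
    (hw : ∀ j, w j * a j j = ∑ i ∈ Finset.univ.erase j, w i * a i j)
    (f : Fin (n + 1) → MvPolynomial (Fin (n + 1)) k)
    (hf : ∀ j, f j = X j ^ a j j - ∏ i ∈ Finset.univ.erase j, X i ^ a i j)
    (I : Ideal (MvPolynomial (Fin (n + 1)) k)) (hI : I = Ideal.span (Set.range f)) :
    ∃ Φ : (MvPolynomial (Fin (n + 1)) k ⧸ I) →ₐ[k]
        Polynomial (MvPolynomial (Fin (n + 1)) k ⧸ I),
      Function.Injective Φ ∧ ∀ i, Φ (Ideal.Quotient.mk I (X i)) =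
        Polynomial.C (Ideal.Quotient.mk I (X i)) * Polynomial.X ^ w i := by
  have hφf : ∀ j, MvPolynomial.aeval (R := k)
      (fun i => Polynomial.C (Ideal.Quotient.mk I (X i)) * Polynomial.X ^ w i) (f j) = 0 := by
    intro j
    rw [hf j]
    refine aeval_scaled_binomial a w _ j (hw j) ?_
    have h : Ideal.Quotient.mk I (f j) = 0 :=
      Ideal.Quotient.eq_zero_iff_mem.mpr (hI ▸ Ideal.subset_span ⟨j, rfl⟩)
    rw [hf j, map_sub, sub_eq_zero] at h
    simpa using h
  obtain ⟨φ, hφ⟩ : ∃ φ : MvPolynomial (Fin (n + 1)) k →ₐ[k]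
      Polynomial (MvPolynomial (Fin (n + 1)) k ⧸ I), φ = MvPolynomial.aeval
        (fun i => Polynomial.C (Ideal.Quotient.mk I (X i)) * Polynomial.X ^ w i) := ⟨_, rfl⟩
  rw [← hφ] at hφf
  have hφX : ∀ i, φ (X i) = Polynomial.C (Ideal.Quotient.mk I (X i)) * Polynomial.X ^ w i :=
    fun i => by rw [hφ, MvPolynomial.aeval_X]
  have hker : I ≤ RingHom.ker φ := by
    refine le_of_eq_of_le hI (Ideal.span_le.mpr ?_)
    rintro _ ⟨j, rfl⟩
    exact hφf j
  refine ⟨Ideal.Quotient.liftₐ I φ fun z hz => hker hz, ?_, hφX⟩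
  have key : ((Polynomial.aeval (1 : MvPolynomial (Fin (n + 1)) k ⧸ I)).restrictScalars k).comp φ
      = Ideal.Quotient.mkₐ k I := by
    apply MvPolynomial.algHom_ext
    intro i
    simp [hφX]
  rw [injective_iff_map_eq_zero]
  intro z hz
  obtain ⟨z, rfl⟩ := Ideal.Quotient.mk_surjective z
  have hz' : φ z = 0 := hz
  have := DFunLike.congr_fun key z
  simp only [AlgHom.comp_apply, hz', map_zero] at this
  exact this.symm

/-! ### Primes containing the PCB ideal -/

/-- If `Q` is a prime containing `I` and no variable, any ideal `p` strictly larger than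
`Q` contains a nonzero polynomial in `x_0`, because `A ⧸ Q` is algebraic over `k[x_0]`. -/
theorem exists_aeval_mem {n : ℕ} {k : Type*} [Field k]
    (a : Fin (n + 1) → Fin (n + 1) → ℕ) (hpos : ∀ i j, 0 < a i j)
    (hsum : ∀ i, a i i = ∑ j ∈ Finset.univ.erase i, a i j)
    (f : Fin (n + 1) → MvPolynomial (Fin (n + 1)) k)
    (hf : ∀ j, f j = X j ^ a j j - ∏ i ∈ Finset.univ.erase j, X i ^ a i j)
    (Q p : Ideal (MvPolynomial (Fin (n + 1)) k)) [Q.IsPrime]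
    (hfQ : ∀ j, f j ∈ Q) (hXQ : ∀ i, X i ∉ Q) (hQp : Q ≤ p)
    (z : MvPolynomial (Fin (n + 1)) k) (hzp : z ∈ p) (hzQ : z ∉ Q) :
    ∃ c : Polynomial k, c ≠ 0 ∧ Polynomial.aeval (X 0 : MvPolynomial (Fin (n + 1)) k) c ∈ p := by
  let D := MvPolynomial (Fin (n + 1)) k ⧸ Q
  let y : Fin (n + 1) → D := fun i => Ideal.Quotient.mk Q (X i)
  let : Algebra (Polynomial k) D := (Polynomial.aeval (y 0)).toRingHom.toAlgebra
  have halg : ∀ c : Polynomial k, algebraMap (Polynomial k) D c = Polynomial.aeval (y 0) c :=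
    fun c => rfl
  have hy : ∀ i, y i ≠ 0 := fun i h => hXQ i (Ideal.Quotient.eq_zero_iff_mem.mp h)
  have hrel : ∀ j, y j ^ a j j = ∏ i ∈ Finset.univ.erase j, y i ^ a i j := by
    intro j
    have := Ideal.Quotient.eq_zero_iff_mem.mpr (hfQ j)
    rw [hf j, map_sub, sub_eq_zero] at this
    simpa [y] using this
  have hyalg : ∀ i, IsAlgebraic (Polynomial k) (y i) := by
    intro i
    by_cases hi : i = 0
    · subst hi
      have : y 0 = algebraMap (Polynomial k) D Polynomial.X := by simp [halg]
      rw [this]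
      exact isAlgebraic_algebraMap _
    · have hinj : Function.Injective (algebraMap D (FractionRing D)) :=
        IsFractionRing.injective D (FractionRing D)
      obtain ⟨N, m, hN, h⟩ := exists_pow_relation a hpos hsum
        (fun i => algebraMap D (FractionRing D) (y i))
        (fun i => by simpa using hy i)
        (fun j => by simpa using congrArg (algebraMap D (FractionRing D)) (hrel j)) i hi
      rcases h with h | h
      · have h' : y i ^ N * y 0 ^ m = 1 := hinj (by simpa using h)
        refine ⟨Polynomial.C (Polynomial.X ^ m) * Polynomial.X ^ N - 1, ?_, ?_⟩
        · intro h0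
          have := congrArg (fun q => Polynomial.coeff q 0) h0
          simp [hN.ne, Polynomial.coeff_one] at this
        · simp [halg, mul_comm, h']
      · have h' : y i ^ N = y 0 ^ m := hinj (by simpa using h)
        refine ⟨Polynomial.X ^ N - Polynomial.C (Polynomial.X ^ m), ?_, ?_⟩
        · exact Polynomial.X_pow_sub_C_ne_zero hN _
        · simp [halg, h']
  have hDalg : ∀ q : MvPolynomial (Fin (n + 1)) k,
      IsAlgebraic (Polynomial k) (Ideal.Quotient.mk Q q : D) := by
    intro q
    induction q using MvPolynomial.induction_on with
    | C r =>
      have : (Ideal.Quotient.mk Q (C r) : D) = algebraMap (Polynomial k) D (Polynomial.C r) := by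
        rw [halg, Polynomial.aeval_C]; rfl
      rw [this]
      exact isAlgebraic_algebraMap _
    | add q₁ q₂ h₁ h₂ => rw [map_add]; exact h₁.add h₂
    | mul_X q i h => rw [map_mul]; exact h.mul (hyalg i)
  have hne := Ideal.comap_ne_bot_of_algebraic_mem (R := Polynomial k)
    (I := p.map (Ideal.Quotient.mk Q)) (x := (Ideal.Quotient.mk Q z : D))
    (fun h => hzQ (Ideal.Quotient.eq_zero_iff_mem.mp h))
    (Ideal.mem_map_of_mem _ hzp) (hDalg z)
  obtain ⟨c, hc, hc0⟩ := Submodule.exists_mem_ne_zero_of_ne_bot hne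
  refine ⟨c, hc0, ?_⟩
  have hc' : Ideal.Quotient.mk Q (Polynomial.aeval (X 0) c) ∈ p.map (Ideal.Quotient.mk Q) := by
    have h1 : Ideal.Quotient.mk Q (Polynomial.aeval (X 0) c) = algebraMap (Polynomial k) D c := by
      rw [halg]
      exact (Polynomial.aeval_algHom_apply (Ideal.Quotient.mkₐ k Q) (X 0) c).symm
    rw [h1]
    exact hc
  have := Ideal.mem_comap.mpr hc'
  rwa [Ideal.comap_map_of_surjective _ Ideal.Quotient.mk_surjective, ← RingHom.ker_eq_comap_bot,
    Ideal.mk_ker, sup_eq_left.mpr hQp] at this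

/-- A prime containing `I` and one variable contains all of them. -/
theorem X_mem_of_X_mem {n : ℕ} {k : Type*} [Field k]
    (a : Fin (n + 1) → Fin (n + 1) → ℕ) (hpos : ∀ i j, 0 < a i j)
    (f : Fin (n + 1) → MvPolynomial (Fin (n + 1)) k)
    (hf : ∀ j, f j = X j ^ a j j - ∏ i ∈ Finset.univ.erase j, X i ^ a i j)
    (p : Ideal (MvPolynomial (Fin (n + 1)) k)) [hp : p.IsPrime] (hfp : ∀ j, f j ∈ p)
    (i j : Fin (n + 1)) (hi : X i ∈ p) : X j ∈ p := by
  by_cases hij : i = j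
  · exact hij ▸ hi
  · refine hp.mem_of_pow_mem (a j j) ?_
    have h1 : (∏ i ∈ Finset.univ.erase j, X i ^ a i j : MvPolynomial (Fin (n + 1)) k) ∈ p :=
      Ideal.mem_of_dvd _ (Finset.dvd_prod_of_mem _
        (Finset.mem_erase.mpr ⟨hij, Finset.mem_univ _⟩)) (Ideal.pow_mem_of_mem p hi _ (hpos i j))
    have := p.add_mem (hfp j) h1
    rwa [hf j, sub_add_cancel] at this

/-- If all variables are nonzerodivisors modulo `I`, then `I` has no embedded primes. -/
theorem mem_minimalPrimes_of_associated {n : ℕ} {k : Type*} [Field k]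
    (a : Fin (n + 1) → Fin (n + 1) → ℕ) (hpos : ∀ i j, 0 < a i j)
    (hsum : ∀ i, a i i = ∑ j ∈ Finset.univ.erase i, a i j)
    (f : Fin (n + 1) → MvPolynomial (Fin (n + 1)) k)
    (hf : ∀ j, f j = X j ^ a j j - ∏ i ∈ Finset.univ.erase j, X i ^ a i j)
    (hX : ∀ i z, X i * z ∈ Ideal.span (Set.range f) → z ∈ Ideal.span (Set.range f))
    (p : Ideal (MvPolynomial (Fin (n + 1)) k))
    (hp : p ∈ associatedPrimes (MvPolynomial (Fin (n + 1)) k)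
        (MvPolynomial (Fin (n + 1)) k ⧸ Ideal.span (Set.range f))) :
    p ∈ (Ideal.span (Set.range f)).minimalPrimes := by
  obtain ⟨hpp, y, hy⟩ := isAssociatedPrime_iff.mp (AssociatedPrimes.mem_iff.mp hp)
  obtain ⟨z, rfl⟩ := Ideal.Quotient.mk_surjective y
  have hmem : ∀ q, q ∈ p ↔ q * z ∈ Ideal.span (Set.range f) := by
    intro q
    rw [hy, Submodule.mem_colon_singleton, Submodule.mem_bot, ← Ideal.Quotient.eq_zero_iff_mem,
      map_mul]
    rfl
  have hz : z ∉ Ideal.span (Set.range f) := by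
    intro h
    exact hpp.ne_top ((Ideal.eq_top_iff_one _).mpr ((hmem 1).mpr (by rwa [one_mul])))
  have hXp : ∀ i, X i ∉ p := fun i h => hz (hX i z ((hmem _).mp h))
  refine ⟨⟨hpp, fun q hq => (hmem q).mpr (Ideal.mul_mem_right _ _ hq)⟩, ?_⟩
  rintro Q ⟨hQ, hIQ⟩ hQp q hq
  by_contra hqQ
  obtain ⟨c, hc, hcp⟩ := exists_aeval_mem a hpos hsum f hf Q p
    (fun j => hIQ (Ideal.subset_span ⟨j, rfl⟩)) (fun i h => hXp i (hQp h)) hQp q hq hqQ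
  obtain ⟨w, hw0, hw⟩ := exists_weight a hpos hsum
  have hX0 : Ideal.Quotient.mk (Ideal.span (Set.range f)) (X 0) ∈
      nonZeroDivisors (MvPolynomial (Fin (n + 1)) k ⧸ Ideal.span (Set.range f)) := by
    rw [mem_nonZeroDivisors_iff_right]
    intro t ht
    obtain ⟨t, rfl⟩ := Ideal.Quotient.mk_surjective t
    rw [← map_mul, Ideal.Quotient.eq_zero_iff_mem, mul_comm] at ht
    exact Ideal.Quotient.eq_zero_iff_mem.mpr (hX 0 t ht)
  obtain ⟨Φ, hΦ, hΦX⟩ := exists_coaction a w hw f hf _ rfl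
  have hnzd := aeval_mem_nonZeroDivisors_of_coaction Φ hΦ _ (w 0) hw0 (hΦX 0) hX0 c hc
  apply hz
  rw [← Ideal.Quotient.eq_zero_iff_mem]
  refine (mem_nonZeroDivisors_iff_right.mp hnzd) _ ?_
  have h1 : Polynomial.aeval (Ideal.Quotient.mk (Ideal.span (Set.range f)) (X 0)) c =
      Ideal.Quotient.mk (Ideal.span (Set.range f)) (Polynomial.aeval (X 0) c) :=
    Polynomial.aeval_algHom_apply (Ideal.Quotient.mkₐ k (Ideal.span (Set.range f))) (X 0) c
  rw [h1, ← map_mul, Ideal.Quotient.eq_zero_iff_mem, mul_comm]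
  exact (hmem _).mp hcp

/-! ### The primary component at the origin -/

/-- If a power of `m` multiplies `S` into `I`, then `I = S ⊓ (I ⊔ m ^ N)` for large `N`, by
the Artin–Rees lemma and the modular law. -/
theorem exists_inf_sup_pow_eq {A : Type*} [CommRing A] [IsNoetherianRing A]
    (I S m : Ideal A) (hIS : I ≤ S) (s : ℕ) (hs : m ^ s * S ≤ I) :
    ∃ N : ℕ, 0 < N ∧ I = S ⊓ (I ⊔ m ^ N) := by
  obtain ⟨r, hr⟩ := Ideal.exists_pow_inf_eq_pow_smul m (M := A) S
  refine ⟨s + r + 1, by omega, ?_⟩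
  have h1 : m ^ (s + r + 1) ⊓ S ≤ I := by
    have := hr (s + r + 1) (by omega)
    rw [smul_eq_mul, Ideal.mul_top] at this
    rw [this, smul_eq_mul]
    calc m ^ (s + r + 1 - r) * (m ^ r • ⊤ ⊓ S) ≤ m ^ s * S :=
          Ideal.mul_mono (Ideal.pow_le_pow_right (by omega)) inf_le_right
      _ ≤ I := hs
  rw [inf_comm, sup_inf_assoc_of_le _ hIS]
  exact (sup_eq_left.mpr h1).symm

theorem isMaximal_span_range_X {n : ℕ} (k : Type*) [Field k] :
    (Ideal.span (Set.range (X : Fin (n + 1) → MvPolynomial (Fin (n + 1)) k))).IsMaximal := by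
  have h : Ideal.span (Set.range (X : Fin (n + 1) → MvPolynomial (Fin (n + 1)) k)) =
      RingHom.ker (constantCoeff : MvPolynomial (Fin (n + 1)) k →+* k) := by
    ext z
    rw [← Set.image_univ, MvPolynomial.mem_ideal_span_X_image, RingHom.mem_ker,
      constantCoeff_eq, ← notMem_support_iff]
    constructor
    · intro hz h0
      obtain ⟨i, -, hi⟩ := hz 0 h0
      exact hi rfl
    · intro hz m hm
      by_contra! hcon
      have : m = 0 := Finsupp.ext fun i => hcon i (Set.mem_univ i)
      exact hz (this ▸ hm)
  rw [h]
  exact RingHom.ker_isMaximal_of_surjective _ fun r => ⟨C r, constantCoeff_C _ r⟩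

theorem exists_pow_mul_mem {A : Type*} [CommRing A] (I : Ideal A) (x : A) (J : Ideal A)
    (hJ : J.FG) (h : ∀ z ∈ J, ∃ N : ℕ, x ^ N * z ∈ I) : ∃ N : ℕ, ∀ z ∈ J, x ^ N * z ∈ I := by
  induction J, hJ using Submodule.fg_induction with
  | singleton g =>
    obtain ⟨N, hN⟩ := h g (Submodule.mem_span_singleton_self g)
    refine ⟨N, fun z hz => ?_⟩
    obtain ⟨r, rfl⟩ := Submodule.mem_span_singleton.mp hz
    rw [smul_eq_mul, mul_left_comm]
    exact I.mul_mem_left r hN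
  | sup J K _ _ hJ hK =>
    obtain ⟨N, hN⟩ := hJ fun z hz => h z (Submodule.mem_sup_left hz)
    obtain ⟨M, hM⟩ := hK fun z hz => h z (Submodule.mem_sup_right hz)
    refine ⟨N + M, fun z hz => ?_⟩
    obtain ⟨u, hu, v, hv, rfl⟩ := Submodule.mem_sup.mp hz
    have h1 := I.mul_mem_left (x ^ M) (hN u hu)
    have h2 := I.mul_mem_left (x ^ N) (hM v hv)
    have := I.add_mem h1 h2
    convert this using 1
    ring

/-- Let `I` be the PCB ideal in `A = k[x_0, …, x_n]` and
`S(I) = IB ∩ A` the contraction of its extension to the Laurent polynomial ring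
`B = A_x`, `x = x_0⋯x_n`.  Then either `I` is unmixed (every associated prime is a
minimal prime) and `I = S(I)`, or there is an `𝔪`-primary ideal `𝔠` with
`I = S(I) ∩ 𝔠`, the intersection being irredundant (`I ≠ S(I)` and `I ≠ 𝔠`). -/
theorem stmt9 {n : ℕ} (hn : 1 ≤ n) (k : Type*) [Field k]
    (a : Fin (n + 1) → Fin (n + 1) → ℕ) (hpos : ∀ i j, 0 < a i j)
    (hsum : ∀ i, a i i = ∑ j ∈ Finset.univ.erase i, a i j)
    (f : Fin (n + 1) → MvPolynomial (Fin (n + 1)) k)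
    (hf : ∀ j, f j = X j ^ a j j - ∏ i ∈ Finset.univ.erase j, X i ^ a i j)
    (I : Ideal (MvPolynomial (Fin (n + 1)) k)) (hI : I = Ideal.span (Set.range f))
    (SI : Ideal (MvPolynomial (Fin (n + 1)) k))
    (hSI : SI = (I.map (algebraMap (MvPolynomial (Fin (n + 1)) k)
        (Localization (Submonoid.powers (∏ i, (X i : MvPolynomial (Fin (n + 1)) k)))))).comap
      (algebraMap (MvPolynomial (Fin (n + 1)) k)
        (Localization (Submonoid.powers (∏ i, (X i : MvPolynomial (Fin (n + 1)) k)))))) :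
    ((∀ p ∈ associatedPrimes (MvPolynomial (Fin (n + 1)) k)
        (MvPolynomial (Fin (n + 1)) k ⧸ I), p ∈ I.minimalPrimes) ∧ I = SI) ∨
      (∃ c : Ideal (MvPolynomial (Fin (n + 1)) k), c.IsPrimary ∧
        c.radical = Ideal.span (Set.range (X : Fin (n + 1) → MvPolynomial (Fin (n + 1)) k)) ∧
        I = SI ⊓ c ∧ I ≠ SI ∧ I ≠ c) := by
  set x : MvPolynomial (Fin (n + 1)) k := ∏ i, X i with hx
  have hmemSI : ∀ z, z ∈ SI ↔ ∃ N : ℕ, x ^ N * z ∈ I := by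
    intro z
    rw [hSI, Ideal.mem_comap, IsLocalization.algebraMap_mem_map_algebraMap_iff
      (Submonoid.powers x)]
    constructor
    · rintro ⟨_, ⟨N, rfl⟩, h⟩
      exact ⟨N, h⟩
    · rintro ⟨N, h⟩
      exact ⟨x ^ N, ⟨N, rfl⟩, h⟩
  have hle : I ≤ SI := fun z hz => (hmemSI z).mpr ⟨0, by simpa using hz⟩
  have hfI : ∀ j, f j ∈ I := fun j => hI ▸ Ideal.subset_span ⟨j, rfl⟩
  by_cases hEq : I = SI
  · refine Or.inl ⟨?_, hEq⟩
    subst hI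
    refine mem_minimalPrimes_of_associated a hpos hsum f hf fun i z hz => ?_
    rw [hEq]
    refine (hmemSI z).mpr ⟨1, ?_⟩
    rw [pow_one, hx, ← Finset.mul_prod_erase _ _ (Finset.mem_univ i), mul_right_comm]
    exact Ideal.mul_mem_right _ _ hz
  · right
    set m := Ideal.span (Set.range (X : Fin (n + 1) → MvPolynomial (Fin (n + 1)) k)) with hm
    have hmax : m.IsMaximal := isMaximal_span_range_X k
    have hIm : I ≤ m := by
      rw [hI, Ideal.span_le]
      rintro _ ⟨j, rfl⟩
      have hXm : ∀ i, (X i : MvPolynomial (Fin (n + 1)) k) ∈ m :=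
        fun i => Ideal.subset_span ⟨i, rfl⟩
      -- With at least two variables, the monomial subtracted in `f j` is not constant.
      obtain ⟨i, hij⟩ : ∃ i : Fin (n + 1), i ≠ j := by
        have : Nontrivial (Fin (n + 1)) := Fin.nontrivial_iff_two_le.mpr (by omega)
        exact exists_ne j
      rw [SetLike.mem_coe, hf j]
      exact m.sub_mem (Ideal.pow_mem_of_mem m (hXm j) _ (hpos j j))
        (Ideal.mem_of_dvd _ (Finset.dvd_prod_of_mem _
          (Finset.mem_erase.mpr ⟨hij, Finset.mem_univ _⟩))
          (Ideal.pow_mem_of_mem m (hXm i) _ (hpos i j)))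
    obtain ⟨s, hs⟩ : ∃ s : ℕ, m ^ s * SI ≤ I := by
      have hx_rad : x ∈ (I.colon (SI : Set (MvPolynomial (Fin (n + 1)) k))).radical := by
        obtain ⟨N, hN⟩ := exists_pow_mul_mem I x SI (IsNoetherian.noetherian SI)
          fun z hz => (hmemSI z).mp hz
        exact ⟨N, Submodule.mem_colon.mpr hN⟩
      have hmrad : m ≤ (I.colon (SI : Set (MvPolynomial (Fin (n + 1)) k))).radical := by
        rw [hm, Ideal.span_le]
        rintro _ ⟨j, rfl⟩
        rw [SetLike.mem_coe, Ideal.radical_eq_sInf, Ideal.mem_sInf]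
        rintro p ⟨hcp, hp⟩
        have hxp : x ∈ p := (Ideal.IsPrime.radical_le_iff hp).mpr hcp hx_rad
        obtain ⟨i, -, hi⟩ := (Ideal.IsPrime.prod_mem_iff (hp := hp)).mp hxp
        refine X_mem_of_X_mem a hpos f hf p (fun j => hcp ?_) i j hi
        rw [Submodule.mem_colon]
        intro z _
        exact I.mul_mem_right z (hfI j)
      obtain ⟨s, hs⟩ := Ideal.exists_pow_le_of_le_radical_of_fg hmrad
        (IsNoetherian.noetherian m)
      refine ⟨s, Ideal.mul_le.mpr fun r hr z hz => ?_⟩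
      exact Submodule.mem_colon.mp (hs hr) z hz
    obtain ⟨N, hN, hcap⟩ := exists_inf_sup_pow_eq I SI m hle s hs
    have hrad : (I ⊔ m ^ N).radical = m := by
      apply le_antisymm
      · exact (Ideal.IsPrime.radical_le_iff hmax.isPrime).mpr
          (sup_le hIm (Ideal.pow_le_self hN.ne'))
      · intro z hz
        exact ⟨N, Ideal.mem_sup_right (Ideal.pow_mem_pow hz N)⟩
    refine ⟨I ⊔ m ^ N, Ideal.isPrimary_of_isMaximal_radical (by rwa [hrad]), hrad, hcap, hEq, ?_⟩
    intro hc
    have h1 : (X 0 : MvPolynomial (Fin (n + 1)) k) ^ N ∈ I := by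
      rw [hc]
      exact Ideal.mem_sup_right (Ideal.pow_mem_pow (Ideal.subset_span (Set.mem_range_self 0)) N)
    -- The binomials vanish at `(1, …, 1)`, while `x_0 ^ N` does not.
    have h2 : I ≤ RingHom.ker (MvPolynomial.eval (fun _ => 1 : Fin (n + 1) → k)) := by
      rw [hI, Ideal.span_le]
      rintro _ ⟨j, rfl⟩
      simp [hf j]
    have := h2 h1
    simp at this
end
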